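/- There exists a non proper storage operator T for Church integers such that ⊢_AF2 T : ∀x{N^g[x] → ¬¬N[x]}, i.e. a storage operator of this type whose result terms τₙ are not closed λ-terms. -/

import Mathlib

/- Pure untyped λ-calculus with de Bruijn indices. -/

inductive Lam : Type
  | var : ℕ → Lam
  | app : Lam → Lam → Lam
  | abs : Lam → Lam
  deriving DecidableEq

namespace Lam

/-- Renaming of free variables. -/
def rename (ρ : ℕ → ℕ) : Lam → Lam
  | var i => var (ρ i)
  | app u v => app (u.rename ρ) (v.rename ρ)
  | abs u => abs (u.rename (fun i => match i with | 0 => 0 | j+1 => ρ j + 1))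

/-- Lifting of a simultaneous substitution under a binder. -/
def liftSub (σ : ℕ → Lam) : ℕ → Lam
  | 0 => var 0
  | i+1 => (σ i).rename (· + 1)

/-- Simultaneous (capture-avoiding) substitution of the free variables. -/
def subst (σ : ℕ → Lam) : Lam → Lam
  | var i => σ i
  | app u v => app (u.subst σ) (v.subst σ)
  | abs u => abs (u.subst (liftSub σ))

/-- `u.subst0 v` is `u[v/x]` for the first variable. -/
def subst0 (u v : Lam) : Lam :=
  u.subst (fun i => match i with | 0 => v | j+1 => var j)

/-- One step of β-reduction (anywhere in the term). -/
inductive Beta : Lam → Lam → Prop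
  | beta (u v : Lam) : Beta (app (abs u) v) (u.subst0 v)
  | appL {u u'} (v) : Beta u u' → Beta (app u v) (app u' v)
  | appR (u) {v v'} : Beta v v' → Beta (app u v) (app u v')
  | abs {u u'} : Beta u u' → Beta (abs u) (abs u')

/-- β-equivalence `≃β`. -/
def BetaEq : Lam → Lam → Prop := Relation.EqvGen Beta

/-- A term is normal if it has no β-redex. -/
def Normal (t : Lam) : Prop := ∀ u, ¬ Beta t u

def IsAbs : Lam → Prop
  | abs _ => True
  | _ => False

/-- One step of head reduction: reduction of the head redex. -/
inductive HeadStep : Lam → Lam → Prop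
  | beta (u v) : HeadStep (app (abs u) v) (u.subst0 v)
  | appL {u u'} (v) : ¬ u.IsAbs → HeadStep u u' → HeadStep (app u v) (app u' v)
  | abs {u u'} : HeadStep u u' → HeadStep (abs u) (abs u')

/-- `HeadRedN n u v` : `u` head-reduces to `v` in exactly `n` steps (`u ≻ v` with `n(u,v) = n`). -/
inductive HeadRedN : ℕ → Lam → Lam → Prop
  | refl (u) : HeadRedN 0 u u
  | step {n u v w} : HeadStep u v → HeadRedN n v w → HeadRedN (n+1) u w

/-- `u ≻ v` : `v` is obtained from `u` by some head reductions. -/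
def HeadRed (u v : Lam) : Prop := ∃ n, HeadRedN n u v

/-- Head normal form. -/
def HeadNF (t : Lam) : Prop := ∀ u, ¬ HeadStep t u

def ClosedUnder : ℕ → Lam → Prop
  | k, var i => i < k
  | k, app u v => ClosedUnder k u ∧ ClosedUnder k v
  | k, abs u => ClosedUnder (k+1) u

/-- Closed λ-term. -/
def Closed (t : Lam) : Prop := ClosedUnder 0 t

/-- `(f)ⁿx` : `iterApp f n x = (f)(f)…(f)x`. -/
def iterApp (f : Lam) : ℕ → Lam → Lam
  | 0, x => x
  | n+1, x => app f (iterApp f n x)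

/-- The Church integer `n̲ = λxλf(f)ⁿx`. -/
def church (n : ℕ) : Lam := abs (abs (iterApp (var 0) n (var 1)))

/-- `(t)w₁…wₖ`. -/
def appList (t : Lam) (ws : List Lam) : Lam := ws.foldl app t

/-- `T` is a storage operator for the closed normal term `t` :
there is `τ ≃β t` such that for every `θ ≃β t` there is a substitution `σ`
(not touching the fresh variable `f`, represented by the de Bruijn index `0`)
with `(T)θf ≻ (f)σ(τ)`. -/
def IsStorageFor (T t : Lam) : Prop :=
  Closed T ∧ ∃ τ, BetaEq τ t ∧ ∀ θ, BetaEq θ t →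
    ∃ σ : ℕ → Lam, σ 0 = var 0 ∧
      HeadRed (app (app T θ) (var 0)) (app (var 0) (τ.subst σ))

end Lam

/- Second order predicate logic : the types of the AF2 type system. -/

/-- A first order language: function symbols with arities, and predicate symbols. -/
structure Sig where
  Fn : Type
  arFn : Fn → ℕ
  Pr : Type

/-- First order terms over `S` (de Bruijn indices for first order variables). -/
inductive FOTerm (S : Sig) : Type
  | var : ℕ → FOTerm S
  | fn : (f : S.Fn) → (Fin (S.arFn f) → FOTerm S) → FOTerm S

namespace FOTerm

variable {S : Sig}

def rename (ρ : ℕ → ℕ) : FOTerm S → FOTerm S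
  | var i => var (ρ i)
  | fn f ts => fn f (fun i => (ts i).rename ρ)

def liftSub (σ : ℕ → FOTerm S) : ℕ → FOTerm S
  | 0 => var 0
  | i+1 => (σ i).rename (· + 1)

/-- Simultaneous substitution on first order terms. -/
def subst (σ : ℕ → FOTerm S) : FOTerm S → FOTerm S
  | var i => σ i
  | fn f ts => fn f (fun i => (ts i).subst σ)

end FOTerm

/-- Formulas of second order predicate logic over `S` : `⊥`, atomic formulas
`P(t₁,…,tₙ)` (predicate symbol) and `X(t₁,…,tₙ)` (predicate variable, de Bruijn),
implication, first order and second order universal quantification. -/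
inductive Form (S : Sig) : Type
  | bot : Form S
  | pr : S.Pr → List (FOTerm S) → Form S
  | pvar : ℕ → List (FOTerm S) → Form S
  | arr : Form S → Form S → Form S
  | fall : Form S → Form S
  | pall : Form S → Form S

namespace Form

variable {S : Sig}

/-- `¬A = A → ⊥`. -/
def neg (A : Form S) : Form S := arr A bot

/-- Substitution of first order terms for the first order variables of a formula. -/
def substFO (σ : ℕ → FOTerm S) : Form S → Form S
  | bot => bot
  | pr P ts => pr P (ts.map (FOTerm.subst σ))
  | pvar X ts => pvar X (ts.map (FOTerm.subst σ))
  | arr A B => arr (A.substFO σ) (B.substFO σ)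
  | fall A => fall (A.substFO (FOTerm.liftSub σ))
  | pall A => pall (A.substFO σ)

/-- `A[u/x]` for the first first-order variable. -/
def substFO0 (A : Form S) (u : FOTerm S) : Form S :=
  A.substFO (fun i => match i with | 0 => u | j+1 => FOTerm.var j)

/-- Lifting of the free first order variables (used for the rule (4)). -/
def shiftFO (A : Form S) : Form S := A.substFO (fun i => FOTerm.var (i+1))

/-- Renaming of the free predicate variables. -/
def rename2 (ρ : ℕ → ℕ) : Form S → Form S
  | bot => bot
  | pr P ts => pr P ts
  | pvar X ts => pvar (ρ X) ts
  | arr A B => arr (A.rename2 ρ) (B.rename2 ρ)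
  | fall A => fall (A.rename2 ρ)
  | pall A => pall (A.rename2 (fun i => match i with | 0 => 0 | j+1 => ρ j + 1))

/-- `inst2 G d e A` : substitution `A[G/X]` of the formula `G` (whose first order
variables `0,…,k-1` are the parameters of the predicate variable `X`) for the
predicate variable `X` of de Bruijn index `e`, where `d` first order binders have
been crossed. Each atomic subformula `X(t₁,…,tₖ)` is replaced by `G[t₁/x₁,…,tₖ/xₖ]`. -/
def inst2 (G : Form S) : ℕ → ℕ → Form S → Form S
  | _, _, bot => bot
  | _, _, pr P ts => pr P ts
  | d, e, pvar X ts =>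
      if X = e then
        (G.rename2 (· + e)).substFO (fun i =>
          if h : i < ts.length then ts.get ⟨i, h⟩ else FOTerm.var (i - ts.length + d))
      else pvar (if e < X then X - 1 else X) ts
  | d, e, arr A B => arr (inst2 G d e A) (inst2 G d e B)
  | d, e, fall A => fall (inst2 G (d+1) e A)
  | d, e, pall A => pall (inst2 G d (e+1) A)

/-- `A[G/X]` for the first predicate variable. -/
def inst2_0 (A G : Form S) : Form S := inst2 G 0 0 A

end Form

/-- Axioms of the equational theory: substitution instances of the equations of `E`. -/
def EqAx {S : Sig} (E : Set (FOTerm S × FOTerm S)) (u v : FOTerm S) : Prop :=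
  ∃ p ∈ E, ∃ σ : ℕ → FOTerm S, u = p.1.subst σ ∧ v = p.2.subst σ

/-- `u ≈ v` : the equivalence relation generated by the substitution instances
of the equations of `E`. -/
def EqE {S : Sig} (E : Set (FOTerm S × FOTerm S)) : FOTerm S → FOTerm S → Prop :=
  Relation.EqvGen (EqAx E)

/-- The AF2 type system: `AF2 S E Γ t A` means `Γ ⊢_{AF2} t : A`
with respect to the set of equations `E` (de Bruijn presentation: the rules
(4) and (6) of ∀-introduction lift the context, which implements the side
condition that the quantified variable does not occur free in `Γ`). -/
inductive AF2 (S : Sig) (E : Set (FOTerm S × FOTerm S)) :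
    List (Form S) → Lam → Form S → Prop
  | var {Γ : List (Form S)} {i : ℕ} {A : Form S} :
      Γ[i]? = some A → AF2 S E Γ (.var i) A
  | absI {Γ : List (Form S)} {A B : Form S} {t : Lam} :
      AF2 S E (A :: Γ) t B → AF2 S E Γ (.abs t) (.arr A B)
  | appE {Γ : List (Form S)} {A B : Form S} {u v : Lam} :
      AF2 S E Γ u (.arr A B) → AF2 S E Γ v A → AF2 S E Γ (.app u v) B
  | fallI {Γ : List (Form S)} {t : Lam} {A : Form S} :
      AF2 S E (Γ.map Form.shiftFO) t A → AF2 S E Γ t (.fall A)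
  | fallE {Γ : List (Form S)} {t : Lam} {A : Form S} (u : FOTerm S) :
      AF2 S E Γ t (.fall A) → AF2 S E Γ t (A.substFO0 u)
  | pallI {Γ : List (Form S)} {t : Lam} {A : Form S} :
      AF2 S E (Γ.map (Form.rename2 (· + 1))) t A → AF2 S E Γ t (.pall A)
  | pallE {Γ : List (Form S)} {t : Lam} {A : Form S} (G : Form S) :
      AF2 S E Γ t (.pall A) → AF2 S E Γ t (A.inst2_0 G)
  | eqE {Γ : List (Form S)} {t : Lam} {A : Form S} {u v : FOTerm S} :
      AF2 S E Γ t (A.substFO0 u) → EqE E u v → AF2 S E Γ t (A.substFO0 v)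

/- The language of arithmetic: a constant 0 and a unary function symbol s. -/

inductive NatFn : Type
  | zero : NatFn
  | succ : NatFn

/-- The signature with a constant symbol `0` and a unary function symbol `s`. -/
def NatSig : Sig where
  Fn := NatFn
  arFn := fun f => match f with | .zero => 0 | .succ => 1
  Pr := Empty

/-- The first order term `0`. -/
def zeroT : FOTerm NatSig := .fn NatFn.zero (fun i => i.elim0)

/-- The first order term `s(u)`. -/
def succT (u : FOTerm NatSig) : FOTerm NatSig := .fn NatFn.succ (fun _ => u)

/-- The first order term `sⁿ(0)`. -/
def numT : ℕ → FOTerm NatSig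
  | 0 => zeroT
  | n+1 => succT (numT n)

/-- The type of integers `N[u] = ∀X{X(0), ∀y(X(y) → X(sy)) → X(u)}`. -/
def NForm (u : FOTerm NatSig) : Form NatSig :=
  .pall (.arr (.pvar 0 [zeroT])
    (.arr (.fall (.arr (.pvar 0 [FOTerm.var 0]) (.pvar 0 [succT (FOTerm.var 0)])))
      (.pvar 0 [u])))

/-- A set of equations is adequate with the type of integers iff
`s(a) ≉ 0` and `s(a) ≈ s(b)` implies `a ≈ b`. -/
def Adequate (E : Set (FOTerm NatSig × FOTerm NatSig)) : Prop :=
  (∀ a, ¬ EqE E (succT a) zeroT) ∧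
  (∀ a b, EqE E (succT a) (succT b) → EqE E a b)

/-- The Gödel translation `F^g`, obtained by putting `¬` in front of
each atomic subformula of `F`. -/
def Form.godel {S : Sig} : Form S → Form S
  | .bot => .neg .bot
  | .pr P ts => .neg (.pr P ts)
  | .pvar X ts => .neg (.pvar X ts)
  | .arr A B => .arr A.godel B.godel
  | .fall A => .fall A.godel
  | .pall A => .pall A.godel

/-- The type `∀x{N^g[x] → ¬¬N[x]}` of storage operators. -/
def storType : Form NatSig :=
  .fall (.arr (NForm (FOTerm.var 0)).godel (.neg (.neg (NForm (FOTerm.var 0)))))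

namespace Lam

/-- `T` is a proper storage operator for `t` : the result `τ` can be chosen closed. -/
def IsProperStorageFor (T t : Lam) : Prop :=
  Closed T ∧ ∃ τ, Closed τ ∧ BetaEq τ t ∧ ∀ θ, BetaEq θ t →
    ∃ σ : ℕ → Lam, σ 0 = var 0 ∧
      HeadRed (app (app T θ) (var 0)) (app (var 0) (τ.subst σ))

end Lam

/-!
Krivine's proper operator sends a representative `θ` of `n` to `sⁿ 0`, where `s` is a successor
term: `θ` iterates `storeSucc` on `storeZero`, and each round prepares one more `s` for the
continuation. The operator `storageOp` moreover decorates the stored value with its own input: it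
reaches `f ((λd. sⁿ 0) θ)`. This is `f τ` with `θ` substituted for `y` in `τ = (λd. sⁿ 0) y`, and
`τ` is β-equivalent to the Church integer, so `storageOp` is a storage operator. A closed `τ` would
have to be syntactically the same for all `θ`, whereas `(λd. sⁿ 0) θ` remembers `θ`.

That `θ`, which is only known to be β-equivalent to a Church integer, iterates under weak head
reduction is obtained without confluence or standardization: in the graph model, interpretation is
invariant under β-equivalence, and a term realizes every point of its interpretation, so `θ`
realizes the point of the Church integer that specifies the iteration.
-/

/-- The environment `s` extended by the value `a` for de Bruijn index `0`; it serves for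
renamings, for substitutions on `λ`-terms and first order terms, and for valuations in a model. -/
def scons {α : Type*} (a : α) (s : ℕ → α) : ℕ → α
  | 0 => a
  | i + 1 => s i

theorem scons_le_scons {α : Type*} [Preorder α] {a b : α} {s t : ℕ → α} (hab : a ≤ b)
    (hst : s ≤ t) : scons a s ≤ scons b t
  | 0 => hab
  | i + 1 => hst i

theorem comp_scons {α β : Type*} (f : α → β) (a : α) (s : ℕ → α) :
    (fun i => f (scons a s i)) = scons (f a) fun i => f (s i) := by
  funext i; cases i <;> rfl

namespace Lam

/-! ### Substitution -/

theorem rename_abs (ρ : ℕ → ℕ) (u : Lam) :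
    (abs u).rename ρ = abs (u.rename (scons 0 fun i => ρ i + 1)) := rfl

theorem subst0_eq_subst_scons (u v : Lam) : u.subst0 v = u.subst (scons v var) := rfl

theorem rename_rename (t : Lam) (ρ ρ' : ℕ → ℕ) :
    (t.rename ρ).rename ρ' = t.rename fun i => ρ' (ρ i) := by
  induction t generalizing ρ ρ' with
  | var i => rfl
  | app u v ihu ihv => simp only [rename, ihu, ihv]
  | abs u ih => simp only [rename_abs, ih, comp_scons]; rfl

theorem subst_rename (t : Lam) (ρ : ℕ → ℕ) (σ : ℕ → Lam) :
    (t.rename ρ).subst σ = t.subst fun i => σ (ρ i) := by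
  induction t generalizing ρ σ with
  | var i => rfl
  | app u v ihu ihv => simp only [rename, subst, ihu, ihv]
  | abs u ih =>
    simp only [rename_abs, subst, ih]
    congr 2
    funext i
    cases i <;> rfl

theorem rename_subst (t : Lam) (σ : ℕ → Lam) (ρ : ℕ → ℕ) :
    (t.subst σ).rename ρ = t.subst fun i => (σ i).rename ρ := by
  induction t generalizing σ ρ with
  | var i => rfl
  | app u v ihu ihv => simp only [rename, subst, ihu, ihv]
  | abs u ih =>
    simp only [rename_abs, subst, ih]
    congr 2
    funext i
    cases i with
    | zero => rfl
    | succ j => simp only [liftSub, rename_rename, scons]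

theorem subst_subst (t : Lam) (σ τ : ℕ → Lam) :
    (t.subst σ).subst τ = t.subst fun i => (σ i).subst τ := by
  induction t generalizing σ τ with
  | var i => rfl
  | app u v ihu ihv => simp only [subst, ihu, ihv]
  | abs u ih =>
    simp only [subst, ih]
    congr 2
    funext i
    cases i with
    | zero => rfl
    | succ j => simp only [liftSub, rename_subst, subst_rename]

theorem subst_var (t : Lam) : t.subst var = t := by
  have liftSub_var : liftSub var = var := by funext i; cases i <;> rfl
  induction t with
  | var i => rfl
  | app u v ihu ihv => simp only [subst, ihu, ihv]
  | abs u ih => simp only [subst, liftSub_var, ih]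

theorem rename_eq_subst (t : Lam) (ρ : ℕ → ℕ) : t.rename ρ = t.subst fun i => var (ρ i) := by
  rw [← subst_var (t.rename ρ), subst_rename]

theorem subst_scons_rename_succ (t v : Lam) (σ : ℕ → Lam) :
    (t.rename (· + 1)).subst (scons v σ) = t.subst σ :=
  subst_rename ..

theorem subst_liftSub_rename_succ (t : Lam) (σ : ℕ → Lam) :
    (t.rename (· + 1)).subst (liftSub σ) = (t.subst σ).rename (· + 1) := by
  rw [subst_rename, rename_subst]
  rfl

theorem subst_liftSub_subst0 (u v : Lam) (σ : ℕ → Lam) :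
    (u.subst (liftSub σ)).subst0 v = u.subst (scons v σ) := by
  rw [subst0_eq_subst_scons, subst_subst]
  congr 1
  funext i
  cases i with
  | zero => rfl
  | succ j => exact (subst_scons_rename_succ ..).trans (subst_var _)

theorem ClosedUnder.subst_eq {t : Lam} {k : ℕ} {σ : ℕ → Lam} (ht : ClosedUnder k t)
    (hσ : ∀ i < k, σ i = var i) : t.subst σ = t := by
  induction t generalizing k σ with
  | var i => exact hσ i ht
  | app u v ihu ihv => simp only [subst, ihu ht.1 hσ, ihv ht.2 hσ]
  | abs u ih =>
    have liftSub_eq : ∀ i < k + 1, liftSub σ i = var i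
      | 0, _ => rfl
      | j + 1, hj => by rw [liftSub, hσ j (Nat.lt_of_succ_lt_succ hj)]; rfl
    rw [subst, ih ht liftSub_eq]

theorem Closed.subst_eq {t : Lam} (ht : Closed t) (σ : ℕ → Lam) : t.subst σ = t :=
  ClosedUnder.subst_eq ht fun _ hi => absurd hi (Nat.not_lt_zero _)

theorem Closed.rename_eq {t : Lam} (ht : Closed t) (ρ : ℕ → ℕ) : t.rename ρ = t := by
  rw [rename_eq_subst, ht.subst_eq]

theorem iterApp_subst (n : ℕ) (f x : Lam) (σ : ℕ → Lam) :
    (iterApp f n x).subst σ = iterApp (f.subst σ) n (x.subst σ) := by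
  induction n with
  | zero => rfl
  | succ n ih => simp only [iterApp, subst, ih]

theorem closedUnder_iterApp {k : ℕ} {f x : Lam} (hf : ClosedUnder k f) (hx : ClosedUnder k x)
    (n : ℕ) : ClosedUnder k (iterApp f n x) := by
  induction n with
  | zero => exact hx
  | succ n ih => exact ⟨hf, ih⟩

theorem closed_church (n : ℕ) : Closed (church n) :=
  closedUnder_iterApp (k := 2) (f := var 0) (x := var 1) Nat.zero_lt_two Nat.one_lt_two n

/-! ### Head reduction -/

theorem headRed_iff_reflTransGen {t u : Lam} :
    HeadRed t u ↔ Relation.ReflTransGen HeadStep t u := by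
  constructor
  · rintro ⟨n, h⟩
    induction h with
    | refl => exact .refl
    | step h _ ih => exact ih.head h
  · intro h
    induction h using Relation.ReflTransGen.head_induction_on with
    | refl => exact ⟨0, .refl _⟩
    | head h _ ih =>
      obtain ⟨n, hn⟩ := ih
      exact ⟨n + 1, .step h hn⟩

theorem headStep_rightUnique : Relator.RightUnique HeadStep := by
  intro t u v hu hv
  induction hu generalizing v with
  | beta =>
    cases hv with
    | beta => rfl
    | appL _ h => exact absurd trivial h
  | appL _ h _ ih =>
    cases hv with
    | beta => exact absurd trivial h
    | appL _ _ hv => rw [ih hv]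
  | abs _ ih =>
    cases hv with
    | abs hv => rw [ih hv]

theorem HeadNF.eq_of_headRed {u v : Lam} (hu : HeadNF u) (huv : HeadRed u v) : u = v := by
  obtain rfl | ⟨w, huw, -⟩ := (headRed_iff_reflTransGen.1 huv).cases_head
  · rfl
  · exact absurd huw (hu w)

theorem HeadRed.headNF_unique {t u v : Lam} (htu : HeadRed t u) (htv : HeadRed t v)
    (hu : HeadNF u) (hv : HeadNF v) : u = v := by
  obtain huv | hvu := Relation.ReflTransGen.total_of_right_unique headStep_rightUnique
    (headRed_iff_reflTransGen.1 htu) (headRed_iff_reflTransGen.1 htv)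
  · exact hu.eq_of_headRed (headRed_iff_reflTransGen.2 huv)
  · exact (hv.eq_of_headRed (headRed_iff_reflTransGen.2 hvu)).symm

theorem headNF_app_var (i : ℕ) (t : Lam) : HeadNF (app (var i) t) := by
  rintro u (_ | ⟨_, -, ⟨⟩⟩)

/-- Weak head reduction contracts the head redex of a term that is not an abstraction. Unlike head
reduction, it is a congruence for application to an argument. -/
inductive WeakHeadStep : Lam → Lam → Prop
  | beta (u v) : WeakHeadStep (app (abs u) v) (u.subst0 v)
  | appL {u u'} (v) : WeakHeadStep u u' → WeakHeadStep (app u v) (app u' v)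

/-- Weak head reduction in any number of steps. -/
abbrev WeakHeadRed : Lam → Lam → Prop := Relation.ReflTransGen WeakHeadStep

theorem WeakHeadStep.not_isAbs {t u : Lam} (h : WeakHeadStep t u) : ¬ t.IsAbs := by
  cases h <;> exact id

theorem WeakHeadStep.headStep {t u : Lam} (h : WeakHeadStep t u) : HeadStep t u := by
  induction h with
  | beta u v => exact .beta u v
  | appL v h ih => exact .appL v h.not_isAbs ih

theorem WeakHeadStep.of_subst0_eq {u v w : Lam} (h : u.subst0 v = w) :
    WeakHeadStep (app (abs u) v) w :=
  h ▸ .beta u v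

theorem WeakHeadRed.headRed {t u : Lam} (h : WeakHeadRed t u) : HeadRed t u :=
  headRed_iff_reflTransGen.2 (Relation.ReflTransGen.mono (fun _ _ => WeakHeadStep.headStep) _ _ h)

theorem WeakHeadRed.appL {t u : Lam} (h : WeakHeadRed t u) (v : Lam) :
    WeakHeadRed (app t v) (app u v) :=
  h.lift (app · v) fun _ _ => .appL v

theorem IsProperStorageFor.output_unique {T t θ₁ θ₂ a₁ a₂ : Lam} (hT : IsProperStorageFor T t)
    (hθ₁ : BetaEq θ₁ t) (ha₁ : HeadRed (app (app T θ₁) (var 0)) (app (var 0) a₁))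
    (hθ₂ : BetaEq θ₂ t) (ha₂ : HeadRed (app (app T θ₂) (var 0)) (app (var 0) a₂)) : a₁ = a₂ := by
  obtain ⟨-, τ, hτ, -, hstore⟩ := hT
  have eq_τ {θ a : Lam} (hθ : BetaEq θ t)
      (ha : HeadRed (app (app T θ) (var 0)) (app (var 0) a)) : a = τ := by
    obtain ⟨σ, -, hσ⟩ := hstore θ hθ
    rw [hτ.subst_eq] at hσ
    exact (app.inj (ha.headNF_unique hσ (headNF_app_var 0 a) (headNF_app_var 0 τ))).2
  exact (eq_τ hθ₁ ha₁).trans (eq_τ hθ₂ ha₂).symm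

/-! ### The graph model -/

/-- The points of the graph model of the `λ`-calculus freely generated by the atoms `α`. As a
piece of information about a function on sets of points, `arr l b` says that `b` belongs to the
image of every set containing `Set.range l`. Finite sets of points are coded by families over
`Fin k`, since an inductive type cannot be nested in `Finset`. -/
inductive GraphPoint (α : Type*)
  | atom (a : α)
  | arr {k : ℕ} (l : Fin k → GraphPoint α) (b : GraphPoint α)

section GraphModel

open GraphPoint

variable {α : Type*}

/-- Interpretation of `λ`-terms in the graph model, relative to a valuation of the free
variables by sets of points. -/
def interp : Lam → (ℕ → Set (GraphPoint α)) → Set (GraphPoint α)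
  | var i, ρ => ρ i
  | app u v, ρ => {b | ∃ (k : ℕ) (l : Fin k → GraphPoint α),
      arr l b ∈ u.interp ρ ∧ ∀ i, l i ∈ v.interp ρ}
  | abs u, ρ => {d | ∃ (k : ℕ) (l : Fin k → GraphPoint α),
      ∃ b ∈ u.interp (scons (Set.range l) ρ), arr l b = d}

theorem arr_mem_interp_abs {u : Lam} {ρ : ℕ → Set (GraphPoint α)} {k : ℕ}
    {l : Fin k → GraphPoint α} {b : GraphPoint α} :
    arr l b ∈ (abs u).interp ρ ↔ b ∈ u.interp (scons (Set.range l) ρ) := by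
  constructor
  · rintro ⟨k, l, b, hb, ⟨⟩⟩
    exact hb
  · exact fun hb => ⟨k, l, b, hb, rfl⟩

theorem interp_mono (t : Lam) :
    Monotone (t.interp : (ℕ → Set (GraphPoint α)) → Set (GraphPoint α)) := by
  induction t with
  | var i => exact fun ρ ρ' h => h i
  | app u v ihu ihv =>
    rintro ρ ρ' h b ⟨k, l, hu, hv⟩
    exact ⟨k, l, ihu h hu, fun i => ihv h (hv i)⟩
  | abs u ih =>
    rintro ρ ρ' h _ ⟨k, l, b, hb, rfl⟩
    exact ⟨k, l, b, ih (scons_le_scons le_rfl h) hb, rfl⟩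

theorem exists_finite_mem_interp {t : Lam} {ρ : ℕ → Set (GraphPoint α)} {b : GraphPoint α}
    (hb : b ∈ t.interp ρ) : ∃ ρ₀ ≤ ρ, (∀ i, (ρ₀ i).Finite) ∧ b ∈ t.interp ρ₀ := by
  induction t generalizing ρ b with
  | var i =>
    refine ⟨fun j => {x | j = i ∧ x = b}, ?_, fun j => ?_, rfl, rfl⟩
    · rintro j x ⟨rfl, rfl⟩
      exact hb
    · exact (Set.finite_singleton b).subset fun x hx => hx.2
  | app u v ihu ihv =>
    obtain ⟨k, l, hu, hv⟩ := hb
    obtain ⟨ρu, hρu, hfinu, hmemu⟩ := ihu hu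
    choose ρv hρv hfinv hmemv using fun i => ihv (hv i)
    refine ⟨ρu ⊔ ⨆ i, ρv i, sup_le hρu (iSup_le hρv), fun j => ?_, k, l,
      interp_mono u le_sup_left hmemu,
      fun i => interp_mono v ((le_iSup ρv i).trans le_sup_right) (hmemv i)⟩
    rw [Pi.sup_apply, iSup_apply]
    exact (hfinu j).union (Set.finite_iUnion fun i => hfinv i j)
  | abs u ih =>
    obtain ⟨k, l, b, hb, rfl⟩ := hb
    obtain ⟨ρ₀, hρ₀, hfin, hmem⟩ := ih hb
    refine ⟨fun i => ρ₀ (i + 1), fun i => hρ₀ (i + 1), fun i => hfin (i + 1), ?_⟩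
    refine arr_mem_interp_abs.2 (interp_mono u (fun i => ?_) hmem)
    cases i with
    | zero => exact hρ₀ 0
    | succ j => exact le_rfl

theorem interp_rename (t : Lam) (f : ℕ → ℕ) (ρ : ℕ → Set (GraphPoint α)) :
    (t.rename f).interp ρ = t.interp fun i => ρ (f i) := by
  induction t generalizing f ρ with
  | var i => rfl
  | app u v ihu ihv => simp only [rename, interp, ihu, ihv]
  | abs u ih => simp only [rename_abs, interp, ih, comp_scons]; rfl

theorem interp_liftSub (σ : ℕ → Lam) (s : Set (GraphPoint α)) (ρ : ℕ → Set (GraphPoint α)) :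
    (fun i => (liftSub σ i).interp (scons s ρ)) = scons s fun i => (σ i).interp ρ := by
  funext i
  cases i with
  | zero => rfl
  | succ j => exact interp_rename ..

theorem interp_subst (t : Lam) (σ : ℕ → Lam) (ρ : ℕ → Set (GraphPoint α)) :
    (t.subst σ).interp ρ = t.interp fun i => (σ i).interp ρ := by
  induction t generalizing σ ρ with
  | var i => rfl
  | app u v ihu ihv => simp only [subst, interp, ihu, ihv]
  | abs u ih => simp only [subst, interp, ih, interp_liftSub]

theorem interp_subst0 (u v : Lam) (ρ : ℕ → Set (GraphPoint α)) :
    (u.subst0 v).interp ρ = u.interp (scons (v.interp ρ) ρ) := by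
  rw [subst0_eq_subst_scons, interp_subst, comp_scons (interp · ρ)]
  rfl

theorem interp_app_abs (u v : Lam) (ρ : ℕ → Set (GraphPoint α)) :
    (app (abs u) v).interp ρ = u.interp (scons (v.interp ρ) ρ) := by
  ext b
  constructor
  · rintro ⟨k, l, hb, hl⟩
    exact interp_mono u (scons_le_scons (Set.range_subset_iff.2 hl) le_rfl)
      (arr_mem_interp_abs.1 hb)
  · intro hb
    obtain ⟨ρ₀, hρ₀, hfin, hmem⟩ := exists_finite_mem_interp hb
    obtain ⟨k, l, -, hl⟩ := (hfin 0).fin_param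
    refine ⟨k, l, arr_mem_interp_abs.2 (interp_mono u (fun i => ?_) hmem), fun i => ?_⟩
    · cases i with
      | zero => exact hl.ge
      | succ j => exact hρ₀ (j + 1)
    · exact hρ₀ 0 (hl ▸ Set.mem_range_self i)

theorem Beta.interp_eq {t u : Lam} (h : Beta t u) :
    (t.interp : (ℕ → Set (GraphPoint α)) → Set (GraphPoint α)) = u.interp := by
  induction h with
  | beta u v => funext ρ; rw [interp_app_abs, interp_subst0]
  | appL _ _ ih => funext ρ; simp only [interp, ih]
  | appR _ _ ih => funext ρ; simp only [interp, ih]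
  | abs _ ih => funext ρ; simp only [interp, ih]

theorem BetaEq.interp_eq {t u : Lam} (h : BetaEq t u) :
    (t.interp : (ℕ → Set (GraphPoint α)) → Set (GraphPoint α)) = u.interp :=
  congrArg (Quot.lift interp fun _ _ => Beta.interp_eq) (Quot.eqvGen_sound h)

/-! ### Realizability -/

/-- A set of terms is saturated if it is closed under weak head expansion. -/
def Saturated (S : Set Lam) : Prop := ∀ ⦃t u⦄, WeakHeadStep t u → u ∈ S → t ∈ S

/-- The terms realizing a point of the graph model, when `S a` is the set of realizers of the
atom `a`: the point `arr l b` is read as the specification `⋂ l i → b`. -/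
def realizers (S : α → Set Lam) : GraphPoint α → Set Lam
  | atom a => S a
  | arr l b => {t | ∀ v, (∀ i, v ∈ realizers S (l i)) → app t v ∈ realizers S b}

variable {S : α → Set Lam}

theorem saturated_realizers (hS : ∀ a, Saturated (S a)) (d : GraphPoint α) :
    Saturated (realizers S d) := by
  induction d with
  | atom a => exact hS a
  | arr l b _ ihb => exact fun t u h hu v hv => ihb (h.appL v) (hu v hv)

theorem subst_mem_realizers (hS : ∀ a, Saturated (S a)) {t : Lam} {ρ : ℕ → Set (GraphPoint α)}
    {σ : ℕ → Lam} (hσ : ∀ i, ∀ a ∈ ρ i, σ i ∈ realizers S a) {d : GraphPoint α}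
    (hd : d ∈ t.interp ρ) : t.subst σ ∈ realizers S d := by
  induction t generalizing ρ σ d with
  | var i => exact hσ i d hd
  | app u v ihu ihv =>
    obtain ⟨k, l, hu, hv⟩ := hd
    exact ihu hσ hu _ fun i => ihv hσ (hv i)
  | abs u ih =>
    obtain ⟨k, l, b, hb, rfl⟩ := hd
    intro v hv
    refine saturated_realizers hS b (.beta _ v) ?_
    rw [subst_liftSub_subst0]
    refine ih (fun i => ?_) hb
    cases i with
    | zero => rintro _ ⟨j, rfl⟩; exact hv j
    | succ j => exact hσ j

theorem mem_realizers_of_mem_interp (hS : ∀ a, Saturated (S a)) {t : Lam} {d : GraphPoint α}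
    (hd : d ∈ t.interp fun _ => ∅) : t ∈ realizers S d := by
  rw [← subst_var t]
  exact subst_mem_realizers hS (fun i a ha => absurd ha (Set.notMem_empty a)) hd

/-- The point `0 → (⋂ i < n, (i → i + 1)) → n` over the atoms `ℕ`: the second order induction
type of `n`, unfolded into finitely many instances of its hypotheses. -/
def churchPoint (n : ℕ) : GraphPoint ℕ :=
  arr (fun _ : Fin 1 => atom 0)
    (arr (fun i : Fin n => arr (fun _ : Fin 1 => atom i.val) (atom (i.val + 1))) (atom n))

theorem churchPoint_mem_interp_church (n : ℕ) (ρ : ℕ → Set (GraphPoint ℕ)) :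
    churchPoint n ∈ (church n).interp ρ := by
  refine arr_mem_interp_abs.2 (arr_mem_interp_abs.2 ?_)
  suffices atom_mem : ∀ m ≤ n, atom m ∈ (iterApp (var 0) m (var 1)).interp (scons (Set.range
      fun i : Fin n => arr (fun _ : Fin 1 => atom i.val) (atom (i.val + 1)))
      (scons (Set.range fun _ : Fin 1 => atom 0) ρ)) from atom_mem n le_rfl
  intro m hm
  induction m with
  | zero => exact ⟨0, rfl⟩
  | succ m ih => exact ⟨1, fun _ => atom m, ⟨⟨m, hm⟩, rfl⟩, fun _ => ih (Nat.le_of_succ_le hm)⟩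

theorem BetaEq.church_induction {n : ℕ} {θ x g : Lam} {S : ℕ → Set Lam} (hθ : BetaEq θ (church n))
    (hS : ∀ i, Saturated (S i)) (hx : x ∈ S 0) (hg : ∀ i, ∀ t ∈ S i, app g t ∈ S (i + 1)) :
    app (app θ x) g ∈ S n := by
  have point_mem : churchPoint n ∈ θ.interp fun _ => ∅ := by
    rw [hθ.interp_eq]
    exact churchPoint_mem_interp_church n _
  exact mem_realizers_of_mem_interp hS point_mem x (fun _ => hx) g
    fun i t ht => hg i t (ht 0)

end GraphModel

/-! ### Unary numerals -/

attribute [local simp] subst0_eq_subst_scons subst liftSub scons rename iterApp_subst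
  subst_scons_rename_succ subst_liftSub_rename_succ subst_var

theorem Beta.of_subst0_eq {u v w : Lam} (h : u.subst0 v = w) : Beta (app (.abs u) v) w :=
  h ▸ .beta u v

theorem BetaEq.appR (u : Lam) {v w : Lam} (h : BetaEq v w) : BetaEq (app u v) (app u w) :=
  Quot.eqvGen_exact (congrArg (Quot.map (app u) fun _ _ => .appR u) (Quot.eqvGen_sound h))

/-- The successor `λm λx λf. f (m x f)` on Church integers. -/
def churchSucc : Lam :=
  abs (abs (abs (app (var 0) (app (app (var 2) (var 1)) (var 0)))))

/-- The representative `sⁿ 0` of `n`, for the successor term `s = churchSucc`. -/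
def unary (n : ℕ) : Lam := iterApp churchSucc n (church 0)

theorem closed_unary (n : ℕ) : Closed (unary n) :=
  closedUnder_iterApp (by simp [churchSucc, ClosedUnder]) (closed_church 0) n

theorem betaEq_churchSucc_church (n : ℕ) :
    BetaEq (app churchSucc (church n)) (church (n + 1)) := by
  have unfold_succ : Beta (app churchSucc (church n))
      (abs (abs (app (var 0) (app (app (church n) (var 1)) (var 0))))) :=
    .of_subst0_eq (by simp [(closed_church n).rename_eq])
  have apply_zero : Beta (app (church n) (var 1)) (abs (iterApp (var 0) n (var 2))) :=
    .of_subst0_eq (by simp)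
  have apply_succ : Beta (app (abs (iterApp (var 0) n (var 2))) (var 0))
      (iterApp (var 0) n (var 1)) :=
    .of_subst0_eq (by simp)
  exact .trans _ _ _ (.rel _ _ unfold_succ) <|
    .trans _ _ _ (.rel _ _ (.abs (.abs (.appR _ (.appL _ apply_zero)))))
      (.rel _ _ (.abs (.abs (.appR _ apply_succ))))

theorem betaEq_unary_church (n : ℕ) : BetaEq (unary n) (church n) := by
  induction n with
  | zero => exact .refl _
  | succ n ih => exact .trans _ _ _ (ih.appR churchSucc) (betaEq_churchSucc_church n)

/-! ### The storage operator -/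

/-- `λf. f 0`: the representation of `0` as a stored value. -/
def storeZero : Lam := abs (app (var 0) (church 0))

/-- `λx λf. x (λz. f (s z))`: the successor on stored values. -/
def storeSucc : Lam :=
  abs (abs (app (var 1) (abs (app (var 1) (app churchSucc (var 0))))))

/-- The non proper storage operator `λn λf. n storeZero storeSucc (λz. f ((λd. z) n))`. -/
def storageOp : Lam :=
  abs (abs (app (app (app (var 1) storeZero) storeSucc)
    (abs (app (var 1) (app (abs (var 1)) (var 2))))))

theorem closed_storageOp : Closed storageOp := by
  simp [storageOp, storeZero, storeSucc, churchSucc, church, iterApp, Closed, ClosedUnder]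

/-- The terms which hand the value `v` to their continuation. -/
def storing (v : Lam) : Set Lam := {t | ∀ F, WeakHeadRed (app t F) (app F v)}

theorem saturated_storing (v : Lam) : Saturated (storing v) :=
  fun _ _ h hu F => (hu F).head (h.appL F)

theorem storeZero_mem_storing : storeZero ∈ storing (church 0) :=
  fun F => .single (.beta _ F)

theorem storeSucc_app_mem_storing {t v : Lam} (ht : t ∈ storing v) :
    app storeSucc t ∈ storing (app churchSucc v) := by
  intro F
  calc
    WeakHeadRed (app (app storeSucc t) F) _ := .single (.appL F (.beta _ t))
    WeakHeadStep _ (app t (abs (app (F.rename (· + 1)) (app churchSucc (var 0))))) :=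
      .of_subst0_eq (by simp [churchSucc])
    WeakHeadRed _ (app (abs (app (F.rename (· + 1)) (app churchSucc (var 0)))) v) := ht _
    WeakHeadStep _ (app F (app churchSucc v)) :=
      .of_subst0_eq (by simp [churchSucc])

theorem weakHeadRed_store {n : ℕ} {θ : Lam} (hθ : BetaEq θ (church n)) (F : Lam) :
    WeakHeadRed (app (app (app θ storeZero) storeSucc) F) (app F (unary n)) :=
  hθ.church_induction (S := fun i => storing (unary i)) (fun _ => saturated_storing _)
    storeZero_mem_storing (fun _ _ => storeSucc_app_mem_storing) F

theorem weakHeadRed_storageOp {n : ℕ} {θ : Lam} (hθ : BetaEq θ (church n)) (F : Lam) :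
    WeakHeadRed (app (app storageOp θ) F) (app F (app (abs (unary n)) θ)) :=
  calc
    WeakHeadRed (app (app storageOp θ) F) _ := .single (.appL F (.beta _ θ))
    WeakHeadStep _ (app (app (app θ storeZero) storeSucc)
        (abs (app (F.rename (· + 1)) (app (abs (var 1)) (θ.rename (· + 1)))))) :=
      .of_subst0_eq (by simp [churchSucc, storeZero, storeSucc, church, iterApp])
    WeakHeadRed _ (app (abs (app (F.rename (· + 1)) (app (abs (var 1)) (θ.rename (· + 1)))))
        (unary n)) := weakHeadRed_store hθ _
    WeakHeadStep _ (app F (app (abs (unary n)) θ)) :=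
      .of_subst0_eq (by simp [(closed_unary n).rename_eq])

theorem isStorageFor_storageOp (n : ℕ) : IsStorageFor storageOp (church n) := by
  have discard : BetaEq (app (abs (unary n)) (var 1)) (unary n) :=
    .rel _ _ (.of_subst0_eq ((closed_unary n).subst_eq _))
  refine ⟨closed_storageOp, app (abs (unary n)) (var 1),
    .trans _ _ _ discard (betaEq_unary_church n), fun θ hθ =>
    ⟨Function.update var 1 θ, Function.update_of_ne zero_ne_one _ _, ?_⟩⟩
  have subst_output : (app (abs (unary n)) (var 1)).subst (Function.update var 1 θ) =
      app (abs (unary n)) θ := by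
    simp only [subst, (closed_unary n).subst_eq, Function.update_self]
  rw [subst_output]
  exact (weakHeadRed_storageOp hθ _).headRed

theorem not_isProperStorageFor_storageOp (n : ℕ) :
    ¬ IsProperStorageFor storageOp (church n) := by
  intro hproper
  have redex_betaEq : BetaEq (app (abs (church n)) (church n)) (church n) :=
    .rel _ _ (.of_subst0_eq ((closed_church n).subst_eq _))
  have output_eq := hproper.output_unique
    (.refl _) (weakHeadRed_storageOp (.refl _) _).headRed
    redex_betaEq (weakHeadRed_storageOp redex_betaEq _).headRed
  have input_eq := (app.inj output_eq).2
  cases input_eq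

end Lam

/-! ### Typing -/

namespace FOTerm

variable {S : Sig}

theorem subst_var (u : FOTerm S) : u.subst var = u := by
  induction u with
  | var i => rfl
  | fn f ts ih => simp only [subst, ih]

theorem liftSub_var : liftSub (var : ℕ → FOTerm S) = var := by
  funext i; cases i <;> rfl

end FOTerm

namespace Form

variable {S : Sig}

theorem substFO_var (A : Form S) : A.substFO FOTerm.var = A := by
  have subst_var_eq_id : FOTerm.subst (S := S) FOTerm.var = id := funext FOTerm.subst_var
  induction A <;> simp_all [substFO, FOTerm.liftSub_var]

theorem rename2_id (A : Form S) : A.rename2 id = A := by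
  have lift_id : (fun i : ℕ => match i with | 0 => 0 | j + 1 => id j + 1) = id := by
    funext i; cases i <;> rfl
  induction A <;> simp_all [rename2]

theorem inst2_pvar_singleton (A : Form S) (d : ℕ) (u : FOTerm S) :
    inst2 A d 0 (pvar 0 [u]) = A.substFO (scons u fun i => FOTerm.var (i + d)) := by
  rw [inst2, if_pos rfl]
  congr 1
  · funext i
    cases i <;> simp [scons]
  · exact rename2_id A

theorem substFO_scons_var_zero (A : Form S) :
    A.substFO (scons (.var 0) fun i => .var (i + 1)) = A := by
  rw [← comp_scons FOTerm.var 0 fun i => i + 1]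
  have scons_eq_id : (scons 0 fun i => i + 1) = (id : ℕ → ℕ) := by
    funext i; cases i <;> rfl
  rw [scons_eq_id]
  exact substFO_var A

end Form

theorem zeroT_subst (σ : ℕ → FOTerm NatSig) : zeroT.subst σ = zeroT :=
  congrArg (FOTerm.fn (S := NatSig) NatFn.zero) (funext fun i : Fin 0 => i.elim0)

theorem nForm_substFO (u : FOTerm NatSig) (σ : ℕ → FOTerm NatSig) :
    (NForm u).substFO σ = NForm (u.subst σ) := by
  simp [NForm, Form.substFO, zeroT_subst, succT, FOTerm.subst, FOTerm.liftSub]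

theorem nForm_rename2 (u : FOTerm NatSig) (ρ : ℕ → ℕ) : (NForm u).rename2 ρ = NForm u := rfl

/-- The instance `A[0] → ∀y(A[y] → A[sy]) → A[u]` of induction, where the formula `A` has its
parameter at the first order variable `0`. -/
def inductionForm (A : Form NatSig) (u : FOTerm NatSig) : Form NatSig :=
  .arr (A.substFO0 zeroT)
    (.arr (.fall (.arr A (A.substFO (scons (succT (.var 0)) fun i => .var (i + 1)))))
      (A.substFO0 u))

section Typing

variable {E : Set (FOTerm NatSig × FOTerm NatSig)} {Γ : List (Form NatSig)} {t : Lam}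
  {u : FOTerm NatSig}

namespace AF2

theorem nForm_elim (A : Form NatSig) (h : AF2 NatSig E Γ t (NForm u)) :
    AF2 NatSig E Γ t (inductionForm A u) := by
  have inst := h.pallE A
  simp only [Form.inst2_0, ↓Form.inst2_pvar_singleton, Form.inst2, zero_add,
    Form.substFO_scons_var_zero] at inst
  exact inst

theorem godel_nForm_elim (A : Form NatSig) (h : AF2 NatSig E Γ t (NForm u).godel) :
    AF2 NatSig E Γ t (inductionForm (.neg A) u) := by
  have inst := h.pallE A
  simp only [Form.inst2_0, Form.godel, Form.neg, ↓Form.inst2_pvar_singleton, Form.inst2, zero_add,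
    Form.substFO_scons_var_zero] at inst
  exact inst

theorem godel_nForm_elim_neg_neg_nForm (h : AF2 NatSig E Γ t (NForm u).godel) :
    AF2 NatSig E Γ t
      (.arr (.neg (.neg (NForm zeroT)))
        (.arr (.fall (.arr (.neg (.neg (NForm (.var 0)))) (.neg (.neg (NForm (succT (.var 0)))))))
          (.neg (.neg (NForm u))))) := by
  simpa only [inductionForm, Form.substFO0, Form.substFO, Form.neg, nForm_substFO, FOTerm.subst,
    scons] using godel_nForm_elim (.neg (NForm (.var 0))) h

end AF2

theorem af2_church_zero : AF2 NatSig E Γ (.church 0) (NForm zeroT) :=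
  .pallI (.absI (.absI (.var rfl)))

theorem af2_churchSucc : AF2 NatSig E Γ .churchSucc (.arr (NForm u) (NForm (succT u))) := by
  refine .absI (.pallI (.absI (.absI ?_)))
  rw [List.map_cons, nForm_rename2]
  refine .appE (A := .pvar 0 [u]) ?_ ?_
  · exact .fallE (A := .arr (.pvar 0 [.var 0]) (.pvar 0 [succT (.var 0)])) u (.var rfl)
  · exact .appE (.appE (AF2.nForm_elim (.pvar 0 [.var 0]) (.var rfl)) (.var rfl)) (.var rfl)

theorem af2_storeZero : AF2 NatSig E Γ .storeZero (.neg (.neg (NForm zeroT))) :=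
  .absI (.appE (.var rfl) af2_church_zero)

theorem af2_storeSucc :
    AF2 NatSig E Γ .storeSucc (.arr (.neg (.neg (NForm u))) (.neg (.neg (NForm (succT u))))) :=
  .absI (.absI (.appE (.var rfl) (.absI (.appE (.var rfl) (.appE af2_churchSucc (.var rfl))))))

theorem af2_storageOp : AF2 NatSig E [] .storageOp storType := by
  refine .fallI (.absI (.absI ?_))
  refine .appE (.appE (.appE (AF2.godel_nForm_elim_neg_neg_nForm (.var rfl)) af2_storeZero)
    (.fallI af2_storeSucc)) ?_
  exact .absI (.appE (.var rfl) (.appE (.absI (.var rfl)) (.var rfl)))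

end Typing

open Lam in
/-- There is a non proper storage operator for Church integers of type
`∀x{N^g[x] → ¬¬N[x]}` in AF2. -/
theorem stmt13 :
    ∃ T : Lam,
      (∀ E : Set (FOTerm NatSig × FOTerm NatSig), AF2 NatSig E [] T storType) ∧
      (∀ n : ℕ, IsStorageFor T (church n)) ∧
      ¬ (∀ n : ℕ, IsProperStorageFor T (church n)) := by
  exact ⟨storageOp, fun _ => af2_storageOp, isStorageFor_storageOp,
    fun hproper => not_isProperStorageFor_storageOp 0 (hproper 0)⟩
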